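/- Let (R,m) be a Noetherian local ring and I an ideal of R. Let x_1,…,x_s,y be a minimal generating set of I, where J=(x_1,…,x_s) is a reduction of I with reduction number r = r_J(I). Assume (a) x_1,…,x_s is a d-sequence, and (b) (x_1,…,x_i) ∩ I^{r+1} = (x_1,…,x_i)I^r for all i = 1,…,s−1. Then rt(I) = r_J(I) + 1 and (Q/Q⟨r⟩)_{r+1} contains the nonzero class of an equation Y^{r+1} − Σ_i X_i F_i induced by the containment y^{r+1} ∈ JI^r. If in addition (c) x_1,…,x_s is an R-regular sequence and (d) (x_1,…,x_i) ∩ I^r = (x_1,…,x_i)I^{r-1} for all i = 1,…,s−1, then there is a form Y^{r+1} − Σ_i X_i F_i ∈ Q_{r+1}, with F_i homogeneous of degree r, such that Q = (Y^{r+1} − Σ_i X_i F_i) + Q⟨r⟩. -/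

import Mathlib

open MvPolynomial

section Defs

variable {R : Type*} [CommRing R]

/-- The presentation of the Rees algebra of the ideal generated by `g`,
sending the `i`-th variable to `(g i) · t` inside `R[t]`. -/
noncomputable def reesPres {m : ℕ} (g : Fin m → R) :
    MvPolynomial (Fin m) R →ₐ[R] Polynomial R :=
  aeval fun i => Polynomial.C (g i) * Polynomial.X

/-- `Q`, the ideal of equations of the Rees algebra w.r.t. the generators `g`. -/
noncomputable def presKer {m : ℕ} (g : Fin m → R) : Ideal (MvPolynomial (Fin m) R) :=
  RingHom.ker (reesPres g)

/-- `Q⟨d⟩`, the subideal of `Q` generated by the homogeneous equations of degree at most `d`. -/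
noncomputable def presKerLe {m : ℕ} (g : Fin m → R) (d : ℕ) : Ideal (MvPolynomial (Fin m) R) :=
  Ideal.span {F | F ∈ presKer g ∧ ∃ k ≤ d, F.IsHomogeneous k}

/-- A `d`-sequence: it minimally generates `(x₁,…,xₛ)`, and
`((x₁,…,xᵢ) : xᵢ₊₁xₖ) = ((x₁,…,xᵢ) : xₖ)` for all `0 ≤ i ≤ s-1`, `k ≥ i+1`. -/
def IsDSequence {s : ℕ} (x : Fin s → R) : Prop :=
  (∀ i : Fin s, Ideal.span (Set.range x) ≠ Ideal.span (x '' {j | j ≠ i})) ∧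
  ∀ i k : Fin s, i ≤ k →
    (Ideal.span (x '' {j | j < i})).colon (Ideal.span {x i * x k})
      = (Ideal.span (x '' {j | j < i})).colon (Ideal.span {x k})

end Defs

/-!
Write `J = (x₁, …, xₛ)`. If `u ∈ I ^ (n + 1)` and `xᵢ u ∈ (x₁, …, xᵢ₋₁)`, then for `n ≥ r` we have
`u ∈ J`, so the `d`-sequence property gives `u ∈ (x₁, …, xᵢ₋₁)`. Combined with (b), which propagates
to all powers of `I` beyond `r + 1` because `I ^ (n + 1) = J I ^ n`, this shows that
`x₁t, …, xₛt` behave like a regular sequence on the Rees algebra in degrees above `r`. Hence an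
equation of degree at least `r + 2` lying in `(X₁, …, Xₛ)` can be rewritten, eliminating `Xₛ, …, X₁`
in turn, through equations of one degree less. Subtracting a multiple of a monic equation
`Y ^ (r + 1) - ∑ Xᵢ Fᵢ`, which exists since `y ^ (r + 1) ∈ J I ^ r`, brings any equation of
degree at least `r + 2` into `(X₁, …, Xₛ)`, so `Q = Q⟨r + 1⟩`. Under (c) and (d) the same regularity
holds one degree lower.

The monic equation is not in `Q⟨r⟩`: the coefficient of the pure power of `Y` in an equation of
degree at most `r` lies in the ideal `(J I ^ (r - 1) : y ^ r)`, which is proper by minimality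
of `r`.
-/

section InitialIdeals

variable {A : Type*} [CommRing A] {m : ℕ}

/-- The ideal generated by the first `k` entries of a finite sequence. -/
def initialIdeal (x : Fin m → A) (k : ℕ) : Ideal A :=
  Ideal.span (x '' {j | (j : ℕ) < k})

theorem initialIdeal_zero (x : Fin m → A) : initialIdeal x 0 = ⊥ := by
  simp [initialIdeal]

theorem initialIdeal_length (x : Fin m → A) : initialIdeal x m = Ideal.span (Set.range x) := by
  simp [initialIdeal]

theorem initialIdeal_mono (x : Fin m → A) : Monotone (initialIdeal x) :=
  fun _ _ hkl => Ideal.span_mono (Set.image_mono fun _ hj => lt_of_lt_of_le hj hkl)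

theorem image_lt_succ {α : Type*} (x : Fin m → α) (k : Fin m) :
    x '' {j | (j : ℕ) < k + 1} = insert (x k) (x '' {j | (j : ℕ) < k}) := by
  rw [← Set.image_insert_eq]
  congr 1
  ext j
  simp [le_iff_eq_or_lt, Fin.ext_iff]

theorem initialIdeal_succ (x : Fin m → A) (k : Fin m) :
    initialIdeal x (k + 1) = Ideal.span {x k} ⊔ initialIdeal x k := by
  rw [initialIdeal, image_lt_succ, Ideal.span_insert, initialIdeal]

theorem mem_initialIdeal_succ_mul_iff (x : Fin m → A) (k : Fin m) {K : Ideal A} {a : A} :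
    a ∈ initialIdeal x (k + 1) * K ↔ ∃ u ∈ K, ∃ w ∈ initialIdeal x k * K, x k * u + w = a := by
  simp [initialIdeal_succ, Ideal.sup_mul, Submodule.mem_sup, Ideal.mem_span_singleton_mul]

theorem initialIdeal_snoc (x : Fin m → A) (y : A) {k : ℕ} (hk : k ≤ m) :
    initialIdeal (Fin.snoc x y : Fin (m + 1) → A) k = initialIdeal x k := by
  have himage : {j : Fin (m + 1) | (j : ℕ) < k} = Fin.castSucc '' {j | (j : ℕ) < k} := by
    ext j
    cases j using Fin.lastCases <;> simp [Fin.castSucc_ne_last, hk]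
  rw [initialIdeal, himage]
  simp [initialIdeal, Set.image_image]

theorem ofList_take_ofFn (x : Fin m → A) (k : ℕ) :
    Ideal.ofList ((List.ofFn x).take k) = initialIdeal x k := by
  rw [Ideal.ofList, initialIdeal]
  congr 1
  ext a
  simp only [Set.mem_ofPred_eq, Set.mem_image, List.mem_take_iff_getElem, List.getElem_ofFn,
    List.length_ofFn, Fin.exists_iff, lt_min_iff]
  constructor
  · rintro ⟨j, ⟨hjk, hjm⟩, rfl⟩
    exact ⟨j, hjm, hjk, rfl⟩
  · rintro ⟨j, hjm, hjk, rfl⟩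
    exact ⟨j, ⟨hjk, hjm⟩, rfl⟩

theorem snoc_image_ne_last {α : Type*} (x : Fin m → α) (y : α) :
    (Fin.snoc x y : Fin (m + 1) → α) '' {j | j ≠ Fin.last m} = Set.range x := by
  ext a
  simp [Fin.exists_fin_succ', Fin.castSucc_ne_last]

theorem sup_span_singleton_pow_succ (J : Ideal A) (y : A) (n : ℕ) :
    (J ⊔ Ideal.span {y}) ^ (n + 1) =
      J * (J ⊔ Ideal.span {y}) ^ n ⊔ Ideal.span {y ^ (n + 1)} := by
  set I := J ⊔ Ideal.span {y}
  have hyI : Ideal.span {y} ≤ I := le_sup_right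
  induction n with
  | zero => simp [I]
  | succ n ih =>
    have hdrop : Ideal.span {y} * (J * I ^ n) ≤ J * I ^ (n + 1) := by
      rw [mul_left_comm, pow_succ']
      exact Ideal.mul_mono_right (Ideal.mul_mono_left hyI)
    calc I ^ (n + 1 + 1)
        = J * I ^ (n + 1) ⊔ Ideal.span {y} * (J * I ^ n ⊔ Ideal.span {y ^ (n + 1)}) := by
          rw [pow_succ' I (n + 1), ← ih, ← Ideal.sup_mul]
      _ = J * I ^ (n + 1) ⊔ Ideal.span {y ^ (n + 1 + 1)} := by
          rw [Ideal.mul_sup, ← sup_assoc, sup_eq_left.mpr hdrop,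
            Ideal.span_singleton_mul_span_singleton, ← pow_succ']

theorem span_range_pow_succ_eq_iff (g : Fin (m + 1) → A) (n : ℕ) :
    Ideal.span (Set.range g) ^ (n + 1) = initialIdeal g m * Ideal.span (Set.range g) ^ n ↔
      g (Fin.last m) ^ (n + 1) ∈ initialIdeal g m * Ideal.span (Set.range g) ^ n := by
  have hsup : Ideal.span (Set.range g) = initialIdeal g m ⊔ Ideal.span {g (Fin.last m)} := by
    rw [← initialIdeal_length, sup_comm]
    exact initialIdeal_succ g (Fin.last m)
  rw [hsup, sup_span_singleton_pow_succ, sup_eq_left, Ideal.span_singleton_le_iff_mem]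

end InitialIdeals

section Forms

variable {R : Type*} [CommRing R] {σ : Type*}

theorem mem_span_X_image_mul_homogeneousSubmodule_iff {S : Set σ} {n : ℕ}
    {F : MvPolynomial σ R} :
    F ∈ Submodule.span R (X '' S) * homogeneousSubmodule σ R n ↔
      F ∈ Ideal.span (X '' S) ∧ F.IsHomogeneous (n + 1) := by
  constructor
  · intro hF
    induction hF using Submodule.mul_induction_on' with
    | mem_mul_mem L hL G hG =>
      refine ⟨Ideal.mul_mem_right _ _ (Submodule.span_le_restrictScalars R _ _ hL), ?_⟩
      have hL1 : L.IsHomogeneous 1 := by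
        rw [← mem_homogeneousSubmodule, homogeneousSubmodule_one_eq_span_X]
        exact Submodule.span_mono (Set.image_subset_range X S) hL
      rw [add_comm]
      exact hL1.mul hG
    | add F _ G _ ihF ihG => exact ⟨add_mem ihF.1 ihG.1, ihF.2.add ihG.2⟩
  · rintro ⟨hF, hFh⟩
    rw [mem_ideal_span_X_image] at hF
    rw [F.as_sum]
    refine Submodule.sum_mem _ fun d hd => ?_
    obtain ⟨i, hi, hdi⟩ := hF d hd
    obtain ⟨e, rfl⟩ : ∃ e, d = Finsupp.single i 1 + e :=
      exists_add_of_le (Finsupp.single_le_iff.mpr (Nat.one_le_iff_ne_zero.mpr hdi))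
    have hdeg : (Finsupp.single i 1 + e).degree = n + 1 := by
      rw [Finsupp.degree_eq_weight_one]
      exact hFh (mem_support_iff.mp hd)
    have he : e.degree = n := by
      rw [map_add, Finsupp.degree_single] at hdeg
      omega
    rw [← one_mul (F.coeff _), ← monomial_mul]
    exact Submodule.mul_mem_mul (Submodule.subset_span ⟨i, hi, rfl⟩) (isHomogeneous_monomial _ he)

theorem mem_span_image_mul_pow_iff {g : σ → R} {S : Set σ} {n : ℕ} {a : R} :
    a ∈ Ideal.span (g '' S) * Ideal.span (Set.range g) ^ n ↔
      ∃ F, (F ∈ Ideal.span (X '' S) ∧ F.IsHomogeneous (n + 1)) ∧ eval g F = a := by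
  have himage : Ideal.span (g '' S) = (Submodule.span R (X '' S)).map (aeval g).toLinearMap := by
    rw [Submodule.map_span, Set.image_image]
    simp
  simp_rw [← mem_span_X_image_mul_homogeneousSubmodule_iff]
  rw [himage, Ideal.span_pow_eq_map_homogeneousSubmodule, ← Submodule.map_mul]
  simp

theorem exists_sub_C_mul_X_last_pow_mem {s n : ℕ} {F : MvPolynomial (Fin (s + 1)) R}
    (hF : F.IsHomogeneous n) :
    ∃ c, F - C c * X (Fin.last s) ^ n ∈ initialIdeal X s := by
  classical
  refine ⟨F.coeff (Finsupp.single (Fin.last s) n), mem_ideal_span_X_image.mpr fun d hd => ?_⟩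
  by_contra! hlow
  have hd_eq : d = Finsupp.single (Fin.last s) (d (Fin.last s)) := by
    ext j
    cases j using Fin.lastCases with
    | last => simp
    | cast j => simp [hlow j.castSucc j.isLt, Fin.castSucc_ne_last]
  have hd_ne : d ≠ Finsupp.single (Fin.last s) n := by
    rintro rfl
    simp [coeff_C_mul, coeff_X_pow] at hd
  have hdeg : d.degree = n := by
    rw [Finsupp.degree_eq_weight_one]
    refine hF fun hcoeff => ?_
    simp [coeff_C_mul, coeff_X_pow, hcoeff, hd_ne.symm] at hd
  rw [hd_eq, Finsupp.degree_single] at hdeg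
  exact hd_ne (hdeg ▸ hd_eq)

theorem exists_X_mul_add_of_mem_initialIdeal_succ {m n : ℕ} (k : Fin m)
    {F : MvPolynomial (Fin m) R} (hF : F ∈ initialIdeal X (k + 1)) (hFh : F.IsHomogeneous (n + 1)) :
    ∃ G, G.IsHomogeneous n ∧ ∃ H ∈ initialIdeal X k, H.IsHomogeneous (n + 1) ∧ X k * G + H = F := by
  have h := mem_span_X_image_mul_homogeneousSubmodule_iff.mpr ⟨hF, hFh⟩
  simpa only [image_lt_succ, Submodule.span_insert, Submodule.sup_mul, Submodule.mem_sup,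
    Submodule.mem_span_singleton_mul, mem_span_X_image_mul_homogeneousSubmodule_iff,
    mem_homogeneousSubmodule, exists_exists_and_eq_and, and_assoc, initialIdeal] using h

end Forms

section Equations

variable {R : Type*} [CommRing R] {m : ℕ} {g : Fin m → R}

theorem reesPres_of_isHomogeneous {F : MvPolynomial (Fin m) R} {n : ℕ} (hF : F.IsHomogeneous n) :
    reesPres g F = Polynomial.C (eval g F) * Polynomial.X ^ n := by
  rw [reesPres, aeval_def, eval₂_eq, eval_eq, map_sum, Finset.sum_mul]
  refine Finset.sum_congr rfl fun d hd => ?_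
  have hdeg : ∑ i ∈ d.support, d i = n := by
    rw [← Finsupp.degree_apply, Finsupp.degree_eq_weight_one]
    exact hF (mem_support_iff.mp hd)
  simp only [mul_pow, Finset.prod_mul_distrib, map_mul, map_prod, map_pow,
    Finset.prod_pow_eq_pow_sum, hdeg, Polynomial.algebraMap_eq, mul_assoc]

theorem mem_presKer_iff_of_isHomogeneous {F : MvPolynomial (Fin m) R} {n : ℕ}
    (hF : F.IsHomogeneous n) : F ∈ presKer g ↔ eval g F = 0 := by
  rw [presKer, RingHom.mem_ker, reesPres_of_isHomogeneous hF,
    Polynomial.C_mul_X_pow_eq_monomial, Polynomial.monomial_eq_zero_iff]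

theorem homogeneousComponent_mem_presKer {F : MvPolynomial (Fin m) R} (hF : F ∈ presKer g)
    (n : ℕ) : homogeneousComponent n F ∈ presKer g := by
  rw [mem_presKer_iff_of_isHomogeneous (homogeneousComponent_isHomogeneous n F)]
  rcases lt_or_ge F.totalDegree n with hn | hn
  · rw [homogeneousComponent_eq_zero n F hn, map_zero]
  · have hcoeff := congrArg (Polynomial.coeff · n) (RingHom.mem_ker.mp hF)
    rw [← sum_homogeneousComponent F] at hcoeff
    simpa [reesPres_of_isHomogeneous (homogeneousComponent_isHomogeneous _ F),
      Polynomial.coeff_X_pow, Nat.lt_succ_iff.mpr hn, Nat.not_lt.mpr hn] using hcoeff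

theorem presKer_le_of_forall_isHomogeneous {L : Ideal (MvPolynomial (Fin m) R)}
    (h : ∀ n, ∀ F ∈ presKer g, F.IsHomogeneous n → F ∈ L) : presKer g ≤ L := by
  intro F hF
  rw [← sum_homogeneousComponent F]
  exact Ideal.sum_mem _ fun n _ => h n _ (homogeneousComponent_mem_presKer hF n)
    (homogeneousComponent_isHomogeneous n F)

theorem presKerLe_le_presKer (d : ℕ) : presKerLe g d ≤ presKer g :=
  Ideal.span_le.mpr fun _ hF => hF.1

theorem presKerLe_mono : Monotone (presKerLe g) :=
  fun _ _ hde => Ideal.span_mono fun _ ⟨hF, k, hk, hFh⟩ => ⟨hF, k, hk.trans hde, hFh⟩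

theorem mem_presKerLe {F : MvPolynomial (Fin m) R} {n d : ℕ} (hF : F ∈ presKer g)
    (hFh : F.IsHomogeneous n) (hn : n ≤ d) : F ∈ presKerLe g d :=
  Ideal.subset_span ⟨hF, n, hn, hFh⟩

theorem isLeast_relationType {r : ℕ} {E : MvPolynomial (Fin m) R}
    (hE : E ∈ presKer g) (hEh : E.IsHomogeneous (r + 1)) (hEr : E ∉ presKerLe g r)
    (hQ : presKer g = Ideal.span {E} ⊔ presKerLe g (r + 1)) :
    IsLeast {N : ℕ | 1 ≤ N ∧ presKer g = presKerLe g N} (r + 1) := by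
  have hE_le : Ideal.span {E} ≤ presKerLe g (r + 1) :=
    (Ideal.span_singleton_le_iff_mem _).mpr (mem_presKerLe hE hEh le_rfl)
  refine ⟨⟨Nat.le_add_left 1 r, hQ.trans (sup_eq_right.mpr hE_le)⟩, ?_⟩
  rintro N ⟨-, hN⟩
  by_contra! hlt
  exact hEr (presKerLe_mono (Nat.le_of_lt_succ hlt) (hN ▸ hE))

/-- The first `k` of the degree-one elements `g i · t` behave like a regular sequence on the Rees
algebra of `I = (g)` in degree `n + 1`: multiplication by `g i · t` is injective on the
degree-`(n + 1)` part of the quotient by the preceding ones. Here the degree-`d` part of the ideal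
generated by `g 0 · t, …, g (i - 1) · t` is `initialIdeal g i * I ^ (d - 1)`. -/
def IsReesRegularInDegree (g : Fin m → R) (k n : ℕ) : Prop :=
  ∀ i : Fin m, (i : ℕ) < k → ∀ u ∈ Ideal.span (Set.range g) ^ (n + 1),
    g i * u ∈ initialIdeal g i * Ideal.span (Set.range g) ^ (n + 1) →
      u ∈ initialIdeal g i * Ideal.span (Set.range g) ^ n

theorem IsReesRegularInDegree.mem_of_mem_initialIdeal {k n : ℕ}
    (hreg : IsReesRegularInDegree g k n) (hk : k ≤ m) {L : Ideal (MvPolynomial (Fin m) R)}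
    (hL : ∀ F ∈ presKer g, F.IsHomogeneous (n + 1) → F ∈ L) {F : MvPolynomial (Fin m) R}
    (hFk : F ∈ initialIdeal X k) (hF : F ∈ presKer g) (hFh : F.IsHomogeneous (n + 2)) :
    F ∈ L := by
  induction k generalizing F with
  | zero =>
    rw [initialIdeal_zero, Ideal.mem_bot] at hFk
    exact hFk ▸ L.zero_mem
  | succ k ih =>
    lift k to Fin m using hk
    obtain ⟨G, hGh, H, hHk, hHh, rfl⟩ := exists_X_mul_add_of_mem_initialIdeal_succ k hFk hFh
    have hGI : eval g G ∈ Ideal.span (Set.range g) ^ (n + 1) :=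
      (Ideal.mem_span_pow_iff_exists_isHomogeneous g _).mpr ⟨G, hGh, rfl⟩
    have hGmul : g k * eval g G ∈ initialIdeal g k * Ideal.span (Set.range g) ^ (n + 1) := by
      rw [mem_presKer_iff_of_isHomogeneous hFh, map_add, map_mul, eval_X] at hF
      rw [eq_neg_of_add_eq_zero_left hF, neg_mem_iff]
      exact mem_span_image_mul_pow_iff.mpr ⟨H, ⟨hHk, hHh⟩, rfl⟩
    obtain ⟨K, ⟨hKk, hKh⟩, hKG⟩ :=
      mem_span_image_mul_pow_iff.mp (hreg k (Nat.lt_succ_self _) _ hGI hGmul)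
    have hGK : G - K ∈ presKer g := by
      rw [mem_presKer_iff_of_isHomogeneous (hGh.sub hKh), map_sub, hKG, sub_self]
    have hsplit : X k * G + H = X k * (G - K) + (X k * K + H) := by ring
    have hXKh : (X k * K).IsHomogeneous (n + 2) :=
      add_comm 1 (n + 1) ▸ (isHomogeneous_X R k).mul hKh
    rw [hsplit] at hF ⊢
    refine L.add_mem (L.mul_mem_left _ (hL _ hGK (hGh.sub hKh))) (ih ?_ k.isLt.le ?_ ?_ ?_)
    · exact fun i hi => hreg i (Nat.lt_succ_of_lt hi)
    · exact add_mem (Ideal.mul_mem_left _ _ hKk) hHk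
    · exact (Ideal.add_mem_iff_right _ (Ideal.mul_mem_left _ _ hGK)).mp hF
    · exact hXKh.add hHh

end Equations

section MonicEquation

variable {R : Type*} [CommRing R] {s : ℕ} {g : Fin (s + 1) → R}

/-- The form `Y ^ (r + 1) - ∑ Xᵢ Fᵢ`, with `Y` the last of the `s + 1` variables. -/
noncomputable def monicForm (r : ℕ) (F : Fin s → MvPolynomial (Fin (s + 1)) R) :
    MvPolynomial (Fin (s + 1)) R :=
  X (Fin.last s) ^ (r + 1) - ∑ i, X i.castSucc * F i

theorem isHomogeneous_monicForm {r : ℕ} {F : Fin s → MvPolynomial (Fin (s + 1)) R}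
    (hF : ∀ i, (F i).IsHomogeneous r) : (monicForm r F).IsHomogeneous (r + 1) :=
  (isHomogeneous_X_pow _ _).sub <| IsHomogeneous.sum _ _ _ fun i _ =>
    add_comm 1 r ▸ (isHomogeneous_X R _).mul (hF i)

theorem X_last_pow_sub_monicForm_mem (r : ℕ) (F : Fin s → MvPolynomial (Fin (s + 1)) R) :
    X (Fin.last s) ^ (r + 1) - monicForm r F ∈ initialIdeal X s := by
  rw [monicForm, sub_sub_cancel]
  exact Ideal.sum_mem _ fun i _ => Ideal.mul_mem_right _ _ (Ideal.subset_span ⟨_, i.isLt, rfl⟩)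

theorem exists_monicForm_mem_presKer {r : ℕ}
    (h : g (Fin.last s) ^ (r + 1) ∈ initialIdeal g s * Ideal.span (Set.range g) ^ r) :
    ∃ F : Fin s → MvPolynomial (Fin (s + 1)) R,
      (∀ i, (F i).IsHomogeneous r) ∧ monicForm r F ∈ presKer g := by
  have hinit : initialIdeal g s = Ideal.span (Set.range fun i : Fin s => g i.castSucc) := by
    rw [← initialIdeal_length, ← initialIdeal_snoc _ (g (Fin.last s)) le_rfl]
    exact congrArg (initialIdeal · s) (Fin.snoc_init_self g).symm
  rw [hinit, mul_comm, ← smul_eq_mul] at h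
  obtain ⟨a, ha, hsum⟩ := (Submodule.mem_ideal_smul_span_iff_exists_sum _ _ _).mp h
  choose F hFh hFa using fun i => (Ideal.mem_span_pow_iff_exists_isHomogeneous g _).mp (ha i)
  refine ⟨F, hFh, ?_⟩
  rw [mem_presKer_iff_of_isHomogeneous (isHomogeneous_monicForm hFh)]
  rw [Finsupp.sum_fintype _ _ (by simp)] at hsum
  simp [monicForm, hFa, ← hsum, mul_comm]

theorem IsReesRegularInDegree.mem_of_isHomogeneous {r n : ℕ}
    (hreg : IsReesRegularInDegree g s n) (hrn : r ≤ n + 1)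
    {L : Ideal (MvPolynomial (Fin (s + 1)) R)} {E F : MvPolynomial (Fin (s + 1)) R}
    (hE : E ∈ presKer g) (hEh : E.IsHomogeneous (r + 1))
    (hElead : X (Fin.last s) ^ (r + 1) - E ∈ initialIdeal X s) (hEL : E ∈ L)
    (hL : ∀ F ∈ presKer g, F.IsHomogeneous (n + 1) → F ∈ L)
    (hF : F ∈ presKer g) (hFh : F.IsHomogeneous (n + 2)) : F ∈ L := by
  obtain ⟨t, ht⟩ := Nat.exists_eq_add_of_le hrn
  obtain ⟨c, hc⟩ := exists_sub_C_mul_X_last_pow_mem hFh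
  set M : MvPolynomial (Fin (s + 1)) R := C c * X (Fin.last s) ^ t
  have hMEh : (M * E).IsHomogeneous (n + 2) := by
    have hMh : M.IsHomogeneous t := (isHomogeneous_X_pow _ _).C_mul c
    convert hMh.mul hEh using 1
    omega
  have hlow : F - M * E ∈ initialIdeal X s := by
    have hsplit : F - M * E =
        (F - C c * X (Fin.last s) ^ (n + 2)) + M * (X (Fin.last s) ^ (r + 1) - E) := by
      rw [show n + 2 = t + (r + 1) by omega]
      ring
    rw [hsplit]
    exact add_mem hc (Ideal.mul_mem_left _ _ hElead)
  have hdiff : F - M * E ∈ L := hreg.mem_of_mem_initialIdeal s.le_succ hL hlow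
    (sub_mem hF (Ideal.mul_mem_left _ _ hE)) (hFh.sub hMEh)
  exact sub_add_cancel F (M * E) ▸ add_mem hdiff (L.mul_mem_left M hEL)

theorem presKer_eq_span_singleton_sup_presKerLe {r d : ℕ} (hrd : r ≤ d + 1)
    (hreg : ∀ n, d ≤ n → IsReesRegularInDegree g s n) {E : MvPolynomial (Fin (s + 1)) R}
    (hE : E ∈ presKer g) (hEh : E.IsHomogeneous (r + 1))
    (hElead : X (Fin.last s) ^ (r + 1) - E ∈ initialIdeal X s) :
    presKer g = Ideal.span {E} ⊔ presKerLe g (d + 1) := by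
  refine le_antisymm (presKer_le_of_forall_isHomogeneous fun n => ?_)
    (sup_le ((Ideal.span_singleton_le_iff_mem _).mpr hE) (presKerLe_le_presKer _))
  have hEL : E ∈ Ideal.span {E} ⊔ presKerLe g (d + 1) :=
    Ideal.mem_sup_left (Ideal.mem_span_singleton_self E)
  rcases le_total n (d + 1) with hn | hn
  · exact fun F hF hFh => Ideal.mem_sup_right (mem_presKerLe hF hFh hn)
  · induction n, hn using Nat.le_induction with
    | base => exact fun F hF hFh => Ideal.mem_sup_right (mem_presKerLe hF hFh le_rfl)
    | succ n hn ih =>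
      obtain ⟨n, rfl⟩ := Nat.exists_eq_succ_of_ne_zero (Nat.ne_zero_of_lt hn)
      exact fun F => (hreg n (by omega)).mem_of_isHomogeneous (by omega) hE hEh hElead hEL ih

theorem mul_last_pow_mem_of_mem_presKer {n : ℕ} {c : R} {F : MvPolynomial (Fin (s + 1)) R}
    (hF : F ∈ presKer g) (hFh : F.IsHomogeneous (n + 1))
    (hc : F - C c * X (Fin.last s) ^ (n + 1) ∈ initialIdeal X s) :
    c * g (Fin.last s) ^ (n + 1) ∈ initialIdeal g s * Ideal.span (Set.range g) ^ n := by
  rw [mem_presKer_iff_of_isHomogeneous hFh] at hF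
  have hlow : eval g (F - C c * X (Fin.last s) ^ (n + 1)) ∈
      initialIdeal g s * Ideal.span (Set.range g) ^ n := mem_span_image_mul_pow_iff.mpr
    ⟨_, ⟨hc, hFh.sub ((isHomogeneous_X_pow _ _).C_mul c)⟩, rfl⟩
  simpa [hF] using hlow

/-- Setting all variables but the last to zero and reducing the coefficients modulo `a`. -/
noncomputable def lastVarMod (s : ℕ) (a : Ideal R) :
    MvPolynomial (Fin (s + 1)) R →ₐ[R] Polynomial (R ⧸ a) :=
  aeval (Fin.snoc 0 Polynomial.X)

theorem initialIdeal_X_le_ker_lastVarMod (a : Ideal R) :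
    initialIdeal X s ≤ RingHom.ker (lastVarMod s a) := by
  refine Ideal.span_le.mpr ?_
  rintro _ ⟨i, hi, rfl⟩
  obtain ⟨i, rfl⟩ := Fin.exists_castSucc_eq.mpr (Fin.lt_last_iff_ne_last.mp hi)
  simp [lastVarMod]

theorem lastVarMod_C_mul_X_last_pow (a : Ideal R) (c : R) (n : ℕ) :
    lastVarMod s a (C c * X (Fin.last s) ^ n) =
      Polynomial.C (Ideal.Quotient.mk a c) * Polynomial.X ^ n := by
  simp [lastVarMod]

theorem presKerLe_succ_le_ker_lastVarMod {n : ℕ} {a : Ideal R}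
    (ha : ∀ c, c * g (Fin.last s) ^ (n + 1) ∈
      initialIdeal g s * Ideal.span (Set.range g) ^ n → c ∈ a) :
    presKerLe g (n + 1) ≤ RingHom.ker (lastVarMod s a) := by
  refine Ideal.span_le.mpr ?_
  rintro F ⟨hF, d, hd, hFh⟩
  cases d with
  | zero =>
    have hFC : F = C (F.coeff 0) :=
      totalDegree_eq_zero_iff_eq_C.mp ((totalDegree_zero_iff_isHomogeneous _).mpr hFh)
    rw [mem_presKer_iff_of_isHomogeneous hFh, hFC, eval_C] at hF
    rw [hFC, hF, C_0]
    exact zero_mem _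
  | succ d =>
    obtain ⟨c, hc⟩ := exists_sub_C_mul_X_last_pow_mem hFh
    obtain ⟨t, rfl⟩ := Nat.exists_eq_add_of_le (Nat.le_of_succ_le_succ hd)
    have hca : c ∈ a := by
      refine ha c ?_
      rw [add_right_comm, pow_add, pow_add, ← mul_assoc, ← mul_assoc]
      exact Ideal.mul_mem_mul (mul_last_pow_mem_of_mem_presKer hF hFh hc)
        (Ideal.pow_mem_pow (Ideal.subset_span (Set.mem_range_self _)) t)
    have hlow := initialIdeal_X_le_ker_lastVarMod a hc
    rw [RingHom.mem_ker, map_sub, lastVarMod_C_mul_X_last_pow,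
      Ideal.Quotient.eq_zero_iff_mem.mpr hca] at hlow
    simpa using hlow

theorem monicForm_notMem_presKerLe {n r : ℕ} (F : Fin s → MvPolynomial (Fin (s + 1)) R)
    (h : g (Fin.last s) ^ (n + 1) ∉ initialIdeal g s * Ideal.span (Set.range g) ^ n) :
    monicForm r F ∉ presKerLe g (n + 1) := by
  intro hmem
  set a := (initialIdeal g s * Ideal.span (Set.range g) ^ n).colon {g (Fin.last s) ^ (n + 1)}
  have hpow : C 1 * X (Fin.last s) ^ (r + 1) ∈ RingHom.ker (lastVarMod s a) := by
    rw [C_1, one_mul, ← sub_add_cancel (X (Fin.last s) ^ (r + 1)) (monicForm r F)]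
    exact add_mem (initialIdeal_X_le_ker_lastVarMod a (X_last_pow_sub_monicForm_mem r F))
      (presKerLe_succ_le_ker_lastVarMod (fun c hc => Submodule.mem_colon_singleton.mpr hc) hmem)
  rw [RingHom.mem_ker, lastVarMod_C_mul_X_last_pow, Polynomial.C_mul_X_pow_eq_monomial,
    Polynomial.monomial_eq_zero_iff, Ideal.Quotient.eq_zero_iff_mem,
    Submodule.mem_colon_singleton, one_smul] at hpow
  exact h hpow

end MonicEquation

section ValabregaValla

variable {R : Type*} [CommRing R] {s : ℕ} {x : Fin s → R}

theorem IsDSequence.mul_mem_of_mul_mul_mem (hx : IsDSequence x) {i k : Fin s} (hik : i ≤ k)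
    {a : R} (h : a * (x i * x k) ∈ initialIdeal x i) : a * x k ∈ initialIdeal x i := by
  rw [initialIdeal, ← Ideal.mem_colon_span_singleton] at h ⊢
  exact (hx.2 i k hik).le h

theorem IsDSequence.mem_of_mul_mem (hx : IsDSequence x) {i : Fin s} {u : R}
    (hu : u ∈ Ideal.span (Set.range x)) (hxu : x i * u ∈ initialIdeal x i) :
    u ∈ initialIdeal x i := by
  refine Nat.decreasingInduction' (P := fun k => u ∈ initialIdeal x k) (fun k hk hik huk => ?_)
    i.isLt.le (initialIdeal_length x ▸ hu)
  lift k to Fin s using hk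
  obtain ⟨a, -, w, hw, hu_eq⟩ := (mem_initialIdeal_succ_mul_iff x k (K := ⊤)).mp
    (by rwa [Ideal.mul_top])
  rw [Ideal.mul_top] at hw
  have hxku : u * x k ∈ initialIdeal x i :=
    hx.mul_mem_of_mul_mul_mem hik
      (mul_left_comm u (x i) (x k) ▸ mul_assoc (x i) u (x k) ▸ Ideal.mul_mem_right _ _ hxu)
  have hsq : a * (x k * x k) ∈ initialIdeal x k := by
    have hsq_eq : a * (x k * x k) = u * x k - w * x k := by
      rw [← hu_eq]
      ring
    rw [hsq_eq]
    exact sub_mem (initialIdeal_mono x hik hxku) (Ideal.mul_mem_right _ _ hw)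
  rw [← hu_eq, mul_comm]
  exact add_mem (hx.mul_mem_of_mul_mul_mem le_rfl hsq) hw

theorem mem_initialIdeal_of_mul_mem_of_isWeaklyRegular
    (hx : RingTheory.Sequence.IsWeaklyRegular R (List.ofFn x)) {i : Fin s} {u : R}
    (hxu : x i * u ∈ initialIdeal x i) : u ∈ initialIdeal x i := by
  have hsmul := hx.regular_mod_prev i (by simp)
  rw [ofList_take_ofFn, smul_eq_mul, Ideal.mul_top] at hsmul
  refine (Submodule.Quotient.mk_eq_zero _).mp (hsmul.right_eq_zero_of_smul ?_)
  rw [← Submodule.Quotient.mk_smul, Submodule.Quotient.mk_eq_zero]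
  simpa using hxu

theorem pow_succ_eq_mul_pow_of_le {I J : Ideal R} {r n : ℕ} (h : I ^ (r + 1) = J * I ^ r)
    (hn : r ≤ n) : I ^ (n + 1) = J * I ^ n := by
  induction n, hn using Nat.le_induction with
  | base => exact h
  | succ n _ ih => rw [pow_succ, ih, mul_assoc, ← pow_succ, ih]

theorem IsDSequence.initialIdeal_inf_pow_le (hx : IsDSequence x) {I : Ideal R} {r : ℕ}
    (hJI : Ideal.span (Set.range x) ≤ I) (hred : I ^ (r + 1) = Ideal.span (Set.range x) * I ^ r)
    (hVV : ∀ i < s, initialIdeal x i ⊓ I ^ (r + 1) ≤ initialIdeal x i * I ^ r)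
    {n : ℕ} (hn : r ≤ n) :
    ∀ i < s, initialIdeal x i ⊓ I ^ (n + 1) ≤ initialIdeal x i * I ^ n := by
  induction n, hn using Nat.le_induction with
  | base => exact hVV
  | succ n hn ih =>
    suffices hle : ∀ i ≤ s, initialIdeal x i ⊓ I ^ (n + 2) ≤ initialIdeal x i * I ^ (n + 1) from
      fun i hi => hle i hi.le
    intro i hi
    induction hi using Nat.decreasingInduction with
    | self =>
      rw [initialIdeal_length, pow_succ_eq_mul_pow_of_le hred (hn.trans n.le_succ)]
      exact inf_le_right
    | of_succ i hi ihi =>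
      lift i to Fin s using hi
      rintro z ⟨hzi, hzI⟩
      obtain ⟨u, hu, w, hw, rfl⟩ := (mem_initialIdeal_succ_mul_iff x i).mp
        (ihi ⟨initialIdeal_mono x (Nat.le_succ i) hzi, hzI⟩)
      have hxu : x i * u ∈ initialIdeal x i :=
        (Ideal.add_mem_iff_left _ (Ideal.mul_le_left hw)).mp hzi
      have huJ : u ∈ Ideal.span (Set.range x) :=
        Ideal.mul_le_left (pow_succ_eq_mul_pow_of_le hred hn ▸ hu)
      have hui : u ∈ initialIdeal x i * I ^ n := ih i i.isLt ⟨hx.mem_of_mul_mem huJ hxu, hu⟩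
      refine add_mem ?_ hw
      rw [mul_comm (x i), pow_succ, ← mul_assoc]
      exact Ideal.mul_mem_mul hui (hJI (Ideal.subset_span ⟨i, rfl⟩))

theorem initialIdeal_inf_le_of_forall_pos {K K' : Ideal R}
    (h : ∀ i, 1 ≤ i → i ≤ s - 1 → initialIdeal x i ⊓ K = initialIdeal x i * K') :
    ∀ i < s, initialIdeal x i ⊓ K ≤ initialIdeal x i * K' := by
  intro i hi
  rcases Nat.eq_zero_or_pos i with rfl | hpos
  · simp [initialIdeal_zero]
  · exact (h i hpos (by omega)).le

theorem isReesRegularInDegree_snoc_of_inf_le {y : R} {I : Ideal R} {n : ℕ}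
    (hgen : I = Ideal.span (Set.range (Fin.snoc x y)))
    (hVV : ∀ i < s, initialIdeal x i ⊓ I ^ (n + 1) ≤ initialIdeal x i * I ^ n)
    (hcancel : ∀ i : Fin s, ∀ u ∈ I ^ (n + 1), x i * u ∈ initialIdeal x i → u ∈ initialIdeal x i) :
    IsReesRegularInDegree (Fin.snoc x y : Fin (s + 1) → R) s n := by
  intro i hi u hu hxu
  obtain ⟨i, rfl⟩ := Fin.exists_castSucc_eq.mpr (Fin.lt_last_iff_ne_last.mp hi)
  rw [← hgen] at hu hxu ⊢
  rw [Fin.val_castSucc, initialIdeal_snoc x y i.isLt.le] at hxu ⊢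
  rw [Fin.snoc_castSucc] at hxu
  exact hVV i i.isLt ⟨hcancel i u hu (Ideal.mul_le_left hxu), hu⟩

theorem IsDSequence.isReesRegularInDegree_snoc (hx : IsDSequence x) {y : R} {I : Ideal R} {r n : ℕ}
    (hgen : I = Ideal.span (Set.range (Fin.snoc x y)))
    (hred : I ^ (r + 1) = Ideal.span (Set.range x) * I ^ r)
    (hVV : ∀ i < s, initialIdeal x i ⊓ I ^ (r + 1) ≤ initialIdeal x i * I ^ r) (hn : r ≤ n) :
    IsReesRegularInDegree (Fin.snoc x y : Fin (s + 1) → R) s n := by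
  have hJI : Ideal.span (Set.range x) ≤ I := by
    rw [hgen, Fin.range_snoc]
    exact Ideal.span_mono (Set.subset_insert _ _)
  refine isReesRegularInDegree_snoc_of_inf_le hgen (hx.initialIdeal_inf_pow_le hJI hred hVV hn) ?_
  intro i u hu
  rw [pow_succ_eq_mul_pow_of_le hred hn] at hu
  exact hx.mem_of_mul_mem (Ideal.mul_le_left hu)

end ValabregaValla

theorem statement3_general {R : Type*} [CommRing R] (I : Ideal R) {s : ℕ} (x : Fin s → R) (y : R)
    (r : ℕ) (J : Ideal R) (hJ : J = Ideal.span (Set.range x))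
    (hgen : I = Ideal.span (Set.range (Fin.snoc x y))) (hIJ : I ≠ J)
    (hred : IsLeast {k : ℕ | I ^ (k + 1) = J * I ^ k} r)
    (ha : IsDSequence x)
    (hb : ∀ i : ℕ, 1 ≤ i → i ≤ s - 1 →
      Ideal.span (x '' {j | (j : ℕ) < i}) ⊓ I ^ (r + 1)
        = Ideal.span (x '' {j | (j : ℕ) < i}) * I ^ r) :
    (IsLeast {N : ℕ | 1 ≤ N ∧ presKer (Fin.snoc x y) = presKerLe (Fin.snoc x y) N} (r + 1) ∧
      ∃ F : Fin s → MvPolynomial (Fin (s + 1)) R, (∀ i, (F i).IsHomogeneous r) ∧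
        (X (Fin.last s) ^ (r + 1) - ∑ i, X i.castSucc * F i) ∈ presKer (Fin.snoc x y) ∧
        (X (Fin.last s) ^ (r + 1) - ∑ i, X i.castSucc * F i) ∉ presKerLe (Fin.snoc x y) r) ∧
    (RingTheory.Sequence.IsWeaklyRegular R (List.ofFn x) →
      (∀ i : ℕ, 1 ≤ i → i ≤ s - 1 →
        Ideal.span (x '' {j | (j : ℕ) < i}) ⊓ I ^ r
          = Ideal.span (x '' {j | (j : ℕ) < i}) * I ^ (r - 1)) →
      ∃ F : Fin s → MvPolynomial (Fin (s + 1)) R, (∀ i, (F i).IsHomogeneous r) ∧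
        (X (Fin.last s) ^ (r + 1) - ∑ i, X i.castSucc * F i) ∈ presKer (Fin.snoc x y) ∧
        presKer (Fin.snoc x y)
          = Ideal.span {X (Fin.last s) ^ (r + 1) - ∑ i, X i.castSucc * F i}
              ⊔ presKerLe (Fin.snoc x y) r) := by
  set g : Fin (s + 1) → R := Fin.snoc x y
  have hJg : J = initialIdeal g s := by rw [initialIdeal_snoc x y le_rfl, initialIdeal_length, hJ]
  have hpow (n : ℕ) : I ^ (n + 1) = J * I ^ n ↔
      g (Fin.last s) ^ (n + 1) ∈ initialIdeal g s * Ideal.span (Set.range g) ^ n := by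
    rw [hgen, hJg, span_range_pow_succ_eq_iff]
  obtain ⟨m, rfl⟩ : ∃ m, r = m + 1 := Nat.exists_eq_succ_of_ne_zero <| by
    rintro rfl
    exact hIJ (by simpa using hred.1)
  obtain ⟨F, hF, hE⟩ := exists_monicForm_mem_presKer ((hpow _).mp hred.1)
  have hEh := isHomogeneous_monicForm hF
  have hElead := X_last_pow_sub_monicForm_mem (m + 1) F
  have hE_notMem : monicForm (m + 1) F ∉ presKerLe g (m + 1) :=
    monicForm_notMem_presKerLe F (mt (hpow m).mpr fun h => (hred.2 h).not_gt m.lt_succ_self)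
  have hreg (n : ℕ) (hn : m + 1 ≤ n) : IsReesRegularInDegree g s n :=
    ha.isReesRegularInDegree_snoc hgen (hJ ▸ hred.1) (initialIdeal_inf_le_of_forall_pos hb) hn
  refine ⟨⟨isLeast_relationType hE hEh hE_notMem ?_, F, hF, hE, hE_notMem⟩,
    fun hc hd => ⟨F, hF, hE, ?_⟩⟩
  · exact presKer_eq_span_singleton_sup_presKerLe (Nat.le_succ _) hreg hE hEh hElead
  · refine presKer_eq_span_singleton_sup_presKerLe le_rfl (fun n hn => ?_) hE hEh hElead
    rcases hn.eq_or_lt with rfl | hn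
    · exact isReesRegularInDegree_snoc_of_inf_le hgen (initialIdeal_inf_le_of_forall_pos hd)
        fun _ _ _ => mem_initialIdeal_of_mul_mem_of_isWeaklyRegular hc
    · exact hreg n hn

/-- Weaker version of Theorem A: under the `d`-sequence and Valabrega–Valla hypotheses,
`rt(I) = r_J(I) + 1` and `(Q/Q⟨r⟩)_{r+1}` contains the nonzero class of an equation
`Y^{r+1} − ∑ Xᵢ Fᵢ`; with the extra hypotheses (c), (d) one gets
`Q = (Y^{r+1} − ∑ Xᵢ Fᵢ) + Q⟨r⟩`. -/
theorem statement3 {R : Type*} [CommRing R] [IsNoetherianRing R] [IsLocalRing R]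
    (I : Ideal R) {s : ℕ} (x : Fin s → R) (y : R) (r : ℕ)
    (J : Ideal R) (hJ : J = Ideal.span (Set.range x))
    (hgen : I = Ideal.span (Set.range (Fin.snoc x y)))
    (hmin : ∀ i : Fin (s + 1), I ≠ Ideal.span (Fin.snoc x y '' {j | j ≠ i}))
    (hred : IsLeast {k : ℕ | I ^ (k + 1) = J * I ^ k} r)
    (ha : IsDSequence x)
    (hb : ∀ i : ℕ, 1 ≤ i → i ≤ s - 1 →
      Ideal.span (x '' {j | (j : ℕ) < i}) ⊓ I ^ (r + 1)
        = Ideal.span (x '' {j | (j : ℕ) < i}) * I ^ r) :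
    (IsLeast {N : ℕ | 1 ≤ N ∧ presKer (Fin.snoc x y) = presKerLe (Fin.snoc x y) N} (r + 1) ∧
      ∃ F : Fin s → MvPolynomial (Fin (s + 1)) R, (∀ i, (F i).IsHomogeneous r) ∧
        (X (Fin.last s) ^ (r + 1) - ∑ i, X i.castSucc * F i) ∈ presKer (Fin.snoc x y) ∧
        (X (Fin.last s) ^ (r + 1) - ∑ i, X i.castSucc * F i) ∉ presKerLe (Fin.snoc x y) r) ∧
    (RingTheory.Sequence.IsRegular R (List.ofFn x) →
      (∀ i : ℕ, 1 ≤ i → i ≤ s - 1 →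
        Ideal.span (x '' {j | (j : ℕ) < i}) ⊓ I ^ r
          = Ideal.span (x '' {j | (j : ℕ) < i}) * I ^ (r - 1)) →
      ∃ F : Fin s → MvPolynomial (Fin (s + 1)) R, (∀ i, (F i).IsHomogeneous r) ∧
        (X (Fin.last s) ^ (r + 1) - ∑ i, X i.castSucc * F i) ∈ presKer (Fin.snoc x y) ∧
        presKer (Fin.snoc x y)
          = Ideal.span {X (Fin.last s) ^ (r + 1) - ∑ i, X i.castSucc * F i}
              ⊔ presKerLe (Fin.snoc x y) r) := by
  have hIJ : I ≠ J := by simpa only [snoc_image_ne_last, ← hJ] using hmin (Fin.last s)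
  exact (statement3_general I x y r J hJ hgen hIJ hred ha hb).imp_right
    fun h hc => h hc.toIsWeaklyRegular
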